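/- arXiv:1812.01327 — 2 statements merged into one kernel-verified Lean document; each statement's English description precedes it below -/
import Mathlib

section
/- Let p < c₂ < p_s^* and λ > 0. Let u : ℝ^N → ℝ be measurable with [u]_{s,p} < ∞, suppose the integrals ∫_Ω |u|^{p_s^*} dx, ∫_Ω f(x,u)u dx and ∫_Ω F(x,u) dx are finite, suppose 0 ≤ c₂ ∫_Ω F(x,u) dx ≤ ∫_Ω f(x,u)u dx, and suppose u satisfies the natural constraint ∫_{ℝ^N}∫_{ℝ^N} Φ(u(x)−u(y))(u(x)−u(y)) K(x,y) dx dy = ∫_Ω |u|^{p_s^*} dx + λ∫_Ω f(x,u)u dx. Then c₂ I(u) ≥ (c₂ Λ⁻⁴/p − 1) (∫_Ω |u|^{p_s^*} dx + λ∫_Ω f(x,u)u dx). -/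
/-!
The growth condition on `Φ`, divided by `τ > 0` and integrated over `[0, |t|]`, gives
`Λ⁻¹ |t|^p / p ≤ PΦ(t) ≤ Λ |t|^p / p` (`PPhi_bounds`); using it again at `t` itself yields
`(Λ⁻² / p) Φ(t) t ≤ PΦ(t) ≤ (Λ² / p) Φ(t) t` (`PPhi_compare`). Multiplying by `K ≥ 0` and
integrating, the lower bound shows that the energy term is at least `(Λ⁻² / p) B`, where `B` is the
right-hand side of the natural constraint, and the upper bound shows that it is finite, so that
`toReal` loses nothing. Then `c₂ < p_s^*` and `c₂ ∫ F ≤ ∫ f(x,u) u` bound the two subtracted terms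
of `c₂ I(u)` by `B`, and `Λ⁻⁴ ≤ Λ⁻²` finishes the proof.
-/

open MeasureTheory ENNReal

/-- The primitive `PΦ(t) = ∫_0^{|t|} Φ(τ) dτ` of `Φ`. -/
noncomputable def PPhi (Φ : ℝ → ℝ) (t : ℝ) : ℝ := ∫ τ in (0:ℝ)..|t|, Φ τ

/-- The primitive `F(x,t) = ∫_0^t f(x,τ) dτ` of the nonlinearity `f`. -/
noncomputable def Fprim (f : α → ℝ → ℝ) (x : α) (t : ℝ) : ℝ := ∫ τ in (0:ℝ)..t, f x τ

theorem PPhi_bounds {p Λ : ℝ} (hp : 1 < p) {Φ : ℝ → ℝ} (hΦc : Continuous Φ) (hΦ0 : Φ 0 = 0)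
    (hΦ : ∀ t : ℝ, Λ⁻¹ * |t| ^ p ≤ Φ t * t ∧ Φ t * t ≤ Λ * |t| ^ p) (t : ℝ) :
    Λ⁻¹ * (|t| ^ p / p) ≤ PPhi Φ t ∧ PPhi Φ t ≤ Λ * (|t| ^ p / p) := by
  have hint : ∫ τ in (0:ℝ)..|t|, τ ^ (p - 1) = |t| ^ p / p := by
    rw [integral_rpow (Or.inl (by linarith))]
    simp [Real.zero_rpow (by linarith : p ≠ 0)]
  have hpt : ∀ τ ∈ Set.Icc (0:ℝ) |t|, Λ⁻¹ * τ ^ (p - 1) ≤ Φ τ ∧ Φ τ ≤ Λ * τ ^ (p - 1) := by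
    intro τ hτ
    rcases hτ.1.eq_or_lt with h | h
    · simp [← h, hΦ0, Real.zero_rpow (by linarith : p - 1 ≠ 0)]
    · have h1 := hΦ τ
      have h2 : |τ| ^ p = τ ^ (p - 1) * τ := by
        rw [abs_of_pos h, Real.rpow_sub_one h.ne', div_mul_cancel₀ _ h.ne']
      rw [h2, ← mul_assoc, ← mul_assoc] at h1
      exact ⟨le_of_mul_le_mul_right h1.1 h, le_of_mul_le_mul_right h1.2 h⟩
  have hi (c : ℝ) : IntervalIntegrable (fun τ : ℝ => c * τ ^ (p - 1)) volume 0 |t| :=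
    (intervalIntegral.intervalIntegrable_rpow' (by linarith)).const_mul c
  have hiΦ := hΦc.intervalIntegrable (μ := volume) 0 |t|
  rw [← hint, ← intervalIntegral.integral_const_mul, ← intervalIntegral.integral_const_mul]
  exact ⟨intervalIntegral.integral_mono_on (abs_nonneg t) (hi _) hiΦ fun τ hτ => (hpt τ hτ).1,
    intervalIntegral.integral_mono_on (abs_nonneg t) hiΦ (hi _) fun τ hτ => (hpt τ hτ).2⟩

theorem PPhi_compare {p Λ : ℝ} (hp : 1 < p) (hΛ : 1 ≤ Λ) {Φ : ℝ → ℝ} (hΦc : Continuous Φ)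
    (hΦ0 : Φ 0 = 0)
    (hΦ : ∀ t : ℝ, Λ⁻¹ * |t| ^ p ≤ Φ t * t ∧ Φ t * t ≤ Λ * |t| ^ p) (t : ℝ) :
    Λ⁻¹ ^ 2 / p * (Φ t * t) ≤ PPhi Φ t ∧ PPhi Φ t ≤ Λ ^ 2 / p * (Φ t * t) := by
  obtain ⟨h1, h2⟩ := PPhi_bounds hp hΦc hΦ0 hΦ t
  obtain ⟨h3, h4⟩ := hΦ t
  have hΛ0 : 0 < Λ := by linarith
  have hp0 : 0 < p := by linarith
  constructor
  · calc Λ⁻¹ ^ 2 / p * (Φ t * t) ≤ Λ⁻¹ ^ 2 / p * (Λ * |t| ^ p) := by gcongr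
      _ = Λ⁻¹ * (|t| ^ p / p) := by field_simp
      _ ≤ _ := h1
  · calc PPhi Φ t ≤ Λ * (|t| ^ p / p) := h2
      _ = Λ ^ 2 / p * (Λ⁻¹ * |t| ^ p) := by field_simp
      _ ≤ _ := by gcongr

/-- Monotonicity of the iterated integral up to a factor; no measurability is needed because the
factor is finite. -/
theorem lintegral_lintegral_ofReal_le {α : Type*} [MeasurableSpace α] (μ : Measure α)
    {g h : α → α → ℝ} {c : ℝ} (hc : 0 ≤ c) (hgh : ∀ x y, g x y ≤ c * h x y) :
    (∫⁻ x, ∫⁻ y, ENNReal.ofReal (g x y) ∂μ ∂μ) ≤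
      ENNReal.ofReal c * ∫⁻ x, ∫⁻ y, ENNReal.ofReal (h x y) ∂μ ∂μ := by
  rw [← lintegral_const_mul' _ _ ENNReal.ofReal_ne_top]
  refine lintegral_mono fun x => ?_
  rw [← lintegral_const_mul' _ _ ENNReal.ofReal_ne_top]
  refine lintegral_mono fun y => ?_
  rw [← ENNReal.ofReal_mul hc]
  exact ENNReal.ofReal_le_ofReal (hgh x y)

/-- under the natural constraint and `0 ≤ c₂∫_Ω F(x,u) ≤ ∫_Ω f(x,u)u`
with `p < c₂ < p_s^*`, one has
`c₂ I(u) ≥ (c₂ Λ⁻⁴/p − 1)(∫_Ω |u|^{p_s^*} dx + λ∫_Ω f(x,u)u dx)`. -/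
theorem stmt7 (N : ℕ) (hN : 0 < N) (s p Λ pstar c₂ : ℝ)
    (hs : 0 < s) (hs1 : s < 1) (hp : 1 < p) (hsp : s * p < N) (hΛ : 1 ≤ Λ)
    (hpstar : pstar = N * p / (N - s * p)) (hpc₂ : p < c₂) (hc₂p : c₂ < pstar)
    (Φ : ℝ → ℝ) (hΦc : Continuous Φ) (hΦ0 : Φ 0 = 0)
    (hΦ : ∀ t : ℝ, Λ⁻¹ * |t| ^ p ≤ Φ t * t ∧ Φ t * t ≤ Λ * |t| ^ p)
    (K : EuclideanSpace ℝ (Fin N) → EuclideanSpace ℝ (Fin N) → ℝ)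
    (hKm : Measurable (fun q : EuclideanSpace ℝ (Fin N) × EuclideanSpace ℝ (Fin N) => K q.1 q.2))
    (hK : ∀ x y, x ≠ y →
      1 / (Λ * ‖x - y‖ ^ ((N : ℝ) + s * p)) ≤ K x y ∧ K x y ≤ Λ / ‖x - y‖ ^ ((N : ℝ) + s * p))
    (Ω : Set (EuclideanSpace ℝ (Fin N))) (hΩo : IsOpen Ω) (hΩb : Bornology.IsBounded Ω)
    (lam : ℝ) (hlam : 0 < lam)
    (f : EuclideanSpace ℝ (Fin N) → ℝ → ℝ)
    (hf : Measurable (fun q : EuclideanSpace ℝ (Fin N) × ℝ => f q.1 q.2))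
    (u : EuclideanSpace ℝ (Fin N) → ℝ) (hu : Measurable u)
    (hgag : (∫⁻ x, ∫⁻ y, ENNReal.ofReal (|u x - u y| ^ p / ‖x - y‖ ^ ((N : ℝ) + s * p))) ≠ ∞)
    (hint1 : IntegrableOn (fun x => |u x| ^ pstar) Ω)
    (hint2 : IntegrableOn (fun x => f x (u x) * u x) Ω)
    (hint3 : IntegrableOn (fun x => Fprim f x (u x)) Ω)
    (hF : 0 ≤ c₂ * ∫ x in Ω, Fprim f x (u x))
    (hFf : c₂ * (∫ x in Ω, Fprim f x (u x)) ≤ ∫ x in Ω, f x (u x) * u x)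
    (hconstraint :
      (∫⁻ x, ∫⁻ y, ENNReal.ofReal (Φ (u x - u y) * (u x - u y) * K x y)) =
        ENNReal.ofReal ((∫ x in Ω, |u x| ^ pstar) + lam * ∫ x in Ω, f x (u x) * u x)) :
    (c₂ * Λ⁻¹ ^ 4 / p - 1) *
        ((∫ x in Ω, |u x| ^ pstar) + lam * ∫ x in Ω, f x (u x) * u x)
      ≤ c₂ *
        ((∫⁻ x, ∫⁻ y, ENNReal.ofReal (PPhi Φ (u x - u y) * K x y)).toReal
          - (1 / pstar) * (∫ x in Ω, |u x| ^ pstar)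
          - lam * ∫ x in Ω, Fprim f x (u x)) := by
  have hΛ0 : 0 < Λ := by linarith
  have hp0 : 0 < p := by linarith
  have hcmp := PPhi_compare hp hΛ hΦc hΦ0 hΦ
  have hKnn : ∀ x y, x ≠ y → 0 ≤ K x y := fun x y hxy =>
    le_trans (by positivity) (hK x y hxy).1
  -- On the diagonal the sign of `K` is unknown, but there `u x - u y = 0`.
  have hPP0 : PPhi Φ 0 = 0 := by simp [PPhi]
  have hlow : ∀ x y, Φ (u x - u y) * (u x - u y) * K x y ≤
      p * Λ ^ 2 * (PPhi Φ (u x - u y) * K x y) := by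
    intro x y
    by_cases hxy : x = y
    · simp [hxy, hPP0]
    · rw [← mul_assoc]
      refine mul_le_mul_of_nonneg_right ?_ (hKnn x y hxy)
      calc Φ (u x - u y) * (u x - u y)
          = p * Λ ^ 2 * (Λ⁻¹ ^ 2 / p * (Φ (u x - u y) * (u x - u y))) := by field_simp
        _ ≤ _ := by gcongr; exact (hcmp _).1
  have hupp : ∀ x y, PPhi Φ (u x - u y) * K x y ≤
      Λ ^ 2 / p * (Φ (u x - u y) * (u x - u y) * K x y) := by
    intro x y
    by_cases hxy : x = y
    · simp [hxy, hPP0]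
    · rw [← mul_assoc]
      exact mul_le_mul_of_nonneg_right (hcmp _).2 (hKnn x y hxy)
  have h1 := lintegral_lintegral_ofReal_le volume (by positivity) hlow
  have h2 := lintegral_lintegral_ofReal_le volume (by positivity) hupp
  rw [hconstraint] at h1 h2
  have hfin := ne_top_of_le_ne_top (ENNReal.mul_ne_top ENNReal.ofReal_ne_top
    ENNReal.ofReal_ne_top) h2
  have hA : 0 ≤ ∫ x in Ω, |u x| ^ pstar := integral_nonneg fun x => by positivity
  have hG : 0 ≤ ∫ x in Ω, f x (u x) * u x := hF.trans hFf
  set E := ∫⁻ x, ∫⁻ y, ENNReal.ofReal (PPhi Φ (u x - u y) * K x y)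
  set A := ∫ x in Ω, |u x| ^ pstar
  set G := ∫ x in Ω, f x (u x) * u x
  set F := ∫ x in Ω, Fprim f x (u x)
  have hB : 0 ≤ A + lam * G := by positivity
  have h3 : A + lam * G ≤ p * Λ ^ 2 * E.toReal := by
    have h := ENNReal.toReal_mono (ENNReal.mul_ne_top ENNReal.ofReal_ne_top hfin) h1
    rwa [ENNReal.toReal_ofReal hB, ENNReal.toReal_mul,
      ENNReal.toReal_ofReal (by positivity)] at h
  have h4 : c₂ * Λ⁻¹ ^ 4 / p * (A + lam * G) ≤ c₂ * E.toReal := by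
    have hc : 0 ≤ c₂ := by linarith
    have hL : Λ⁻¹ ^ 2 ≤ 1 := pow_le_one₀ (by positivity) (inv_le_one_of_one_le₀ hΛ)
    calc c₂ * Λ⁻¹ ^ 4 / p * (A + lam * G)
        ≤ c₂ * Λ⁻¹ ^ 4 / p * (p * Λ ^ 2 * E.toReal) := by gcongr
      _ = c₂ * E.toReal * Λ⁻¹ ^ 2 := by field_simp
      _ ≤ c₂ * E.toReal * 1 := by gcongr
      _ = c₂ * E.toReal := mul_one _
  have h5 : c₂ * (1 / pstar * A) ≤ A := by
    have : c₂ / pstar ≤ 1 := (div_le_one (by linarith)).2 hc₂p.le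
    calc c₂ * (1 / pstar * A) = c₂ / pstar * A := by ring
      _ ≤ 1 * A := by gcongr
      _ = A := one_mul _
  have h6 : lam * (c₂ * F) ≤ lam * G := by gcongr
  linarith
end

section
/- Let p < p_s^*, a > 0, c₁ ∈ (0, 1/(p_s^*−1)) and λ > 0, and assume (aΛ + Λ²)Λ² ≤ p_s^*. Assume in addition that Φ is differentiable with a⁻¹|t|^p ≤ Φ′(t)t² ≤ a|t|^p for all t ∈ ℝ. Let u : ℝ^N → ℝ be measurable with positive part u₊ = max(u,0) satisfying [u₊]_{s,p} < ∞, suppose all the integrals below are finite, suppose u satisfies the constraint ∫_{ℝ^N}∫_{ℝ^N} Φ(u₊(x)−u₊(y))(u₊(x)−u₊(y)) K(x,y) dx dy = ∫_Ω |u₊|^{p_s^*} dx + λ∫_Ω f(x,u)u₊ dx, and suppose 0 ≤ ∫_Ω f(x,u)u₊ dx ≤ c₁ ∫_Ω f_u(x,u)u₊² dx with ∫_Ω f_u(x,u)u₊² dx > 0. Then ∫_{ℝ^N}∫_{ℝ^N} [Φ′(u₊(x)−u₊(y))(u₊(x)−u₊(y))² + Φ(u₊(x)−u₊(y))(u₊(x)−u₊(y))]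 K(x,y) dx dy − p_s^* ∫_Ω |u₊|^{p_s^*} dx − λ∫_Ω f(x,u)u₊ dx − λ∫_Ω f_u(x,u)u₊² dx < 0. -/
/-! With `t = u₊(x) - u₊(y)`, the growth bounds give the pointwise comparison
`Φ'(t)t² + Φ(t)t ≤ (a + Λ)|t|^p ≤ (aΛ + Λ²) Φ(t)t ≤ p_s^* Φ(t)t`, and since `K ≥ 0` off the
diagonal this integrates: the double integral is at most `p_s^*` times the energy in the constraint. Substituting
the constraint cancels the critical term and leaves
`λ((p_s^* - 1)∫ f u₊ - ∫ f_u u₊²) ≤ λ((p_s^* - 1)c₁ - 1)∫ f_u u₊² < 0`. -/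

open MeasureTheory ENNReal

/-- strict negativity of `d/dε ψ₁(u + εu₊)|_{ε=0}`, the key step in
showing that `0` is a regular value of the constraint functional `ψ₁` (Lemma 3.4). -/
theorem stmt11 (N : ℕ) (hN : 0 < N) (s p Λ pstar a c₁ : ℝ)
    (hs : 0 < s) (hs1 : s < 1) (hp : 1 < p) (hsp : s * p < N) (hΛ : 1 ≤ Λ)
    (hpstar : pstar = N * p / (N - s * p)) (hppstar : p < pstar)
    (ha : 0 < a) (hc₁0 : 0 < c₁) (hc₁ : c₁ < 1 / (pstar - 1))
    (haΛ : (a * Λ + Λ ^ 2) * Λ ^ 2 ≤ pstar)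
    (Φ : ℝ → ℝ) (hΦc : Continuous Φ) (hΦ0 : Φ 0 = 0)
    (hΦ : ∀ t : ℝ, Λ⁻¹ * |t| ^ p ≤ Φ t * t ∧ Φ t * t ≤ Λ * |t| ^ p)
    (hΦd : Differentiable ℝ Φ)
    (hΦ' : ∀ t : ℝ, a⁻¹ * |t| ^ p ≤ deriv Φ t * t ^ 2 ∧ deriv Φ t * t ^ 2 ≤ a * |t| ^ p)
    (K : EuclideanSpace ℝ (Fin N) → EuclideanSpace ℝ (Fin N) → ℝ)
    (hKm : Measurable (fun q : EuclideanSpace ℝ (Fin N) × EuclideanSpace ℝ (Fin N) => K q.1 q.2))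
    (hK : ∀ x y, x ≠ y →
      1 / (Λ * ‖x - y‖ ^ ((N : ℝ) + s * p)) ≤ K x y ∧ K x y ≤ Λ / ‖x - y‖ ^ ((N : ℝ) + s * p))
    (Ω : Set (EuclideanSpace ℝ (Fin N))) (hΩo : IsOpen Ω) (hΩb : Bornology.IsBounded Ω)
    (lam : ℝ) (hlam : 0 < lam)
    (f fu : EuclideanSpace ℝ (Fin N) → ℝ → ℝ)
    (hf : Measurable (fun q : EuclideanSpace ℝ (Fin N) × ℝ => f q.1 q.2))
    (hfd : ∀ x ∈ Ω, ∀ t : ℝ, HasDerivAt (f x) (fu x t) t)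
    (hfdc : ∀ x ∈ Ω, Continuous (fu x))
    (u : EuclideanSpace ℝ (Fin N) → ℝ) (hu : Measurable u)
    (hgag : (∫⁻ x, ∫⁻ y, ENNReal.ofReal
        (|max (u x) 0 - max (u y) 0| ^ p / ‖x - y‖ ^ ((N : ℝ) + s * p))) ≠ ∞)
    (hint1 : IntegrableOn (fun x => (max (u x) 0) ^ pstar) Ω)
    (hint2 : IntegrableOn (fun x => f x (u x) * max (u x) 0) Ω)
    (hint3 : IntegrableOn (fun x => fu x (u x) * (max (u x) 0) ^ 2) Ω)
    (hconstraint :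
      (∫⁻ x, ∫⁻ y, ENNReal.ofReal
          (Φ (max (u x) 0 - max (u y) 0) * (max (u x) 0 - max (u y) 0) * K x y)) =
        ENNReal.ofReal ((∫ x in Ω, (max (u x) 0) ^ pstar) +
          lam * ∫ x in Ω, f x (u x) * max (u x) 0))
    (hfpos : 0 ≤ ∫ x in Ω, f x (u x) * max (u x) 0)
    (hfc₁ : (∫ x in Ω, f x (u x) * max (u x) 0) ≤
      c₁ * ∫ x in Ω, fu x (u x) * (max (u x) 0) ^ 2)
    (hfup : 0 < ∫ x in Ω, fu x (u x) * (max (u x) 0) ^ 2) :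
    (∫⁻ x, ∫⁻ y, ENNReal.ofReal
        ((deriv Φ (max (u x) 0 - max (u y) 0) * (max (u x) 0 - max (u y) 0) ^ 2
          + Φ (max (u x) 0 - max (u y) 0) * (max (u x) 0 - max (u y) 0)) * K x y)).toReal
      - pstar * (∫ x in Ω, (max (u x) 0) ^ pstar)
      - lam * (∫ x in Ω, f x (u x) * max (u x) 0)
      - lam * (∫ x in Ω, fu x (u x) * (max (u x) 0) ^ 2) < 0 := by
  have hΛ0 : 0 < Λ := by linarith
  have hpstar0 : 0 < pstar := by linarith
  have hM : a * Λ + Λ ^ 2 ≤ pstar := by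
    have h1 : 1 ≤ Λ ^ 2 := one_le_pow₀ hΛ
    have h2 : 0 ≤ a * Λ + Λ ^ 2 := by positivity
    nlinarith
  have hpow : ∀ t : ℝ, |t| ^ p ≤ Λ * (Φ t * t) := fun t => by
    have h := mul_le_mul_of_nonneg_left (hΦ t).1 hΛ0.le
    rwa [mul_inv_cancel_left₀ hΛ0.ne'] at h
  have hΦnonneg : ∀ t : ℝ, 0 ≤ Φ t * t := fun t => le_trans (by positivity) (hΦ t).1
  have hpt : ∀ t : ℝ, deriv Φ t * t ^ 2 + Φ t * t ≤ pstar * (Φ t * t) := fun t => by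
    have h1 : deriv Φ t * t ^ 2 + Φ t * t ≤ (a + Λ) * |t| ^ p := by
      linarith [(hΦ' t).2, (hΦ t).2]
    have h2 : (a + Λ) * |t| ^ p ≤ (a + Λ) * (Λ * (Φ t * t)) :=
      mul_le_mul_of_nonneg_left (hpow t) (by positivity)
    have h3 := mul_le_mul_of_nonneg_right hM (hΦnonneg t)
    linarith
  set C := ∫ x in Ω, (max (u x) 0) ^ pstar with hC
  set F := ∫ x in Ω, f x (u x) * max (u x) 0 with hF
  set G := ∫ x in Ω, fu x (u x) * (max (u x) 0) ^ 2 with hG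
  have hC0 : 0 ≤ C := integral_nonneg fun x => Real.rpow_nonneg (le_max_right _ _) _
  have hCF : 0 ≤ C + lam * F := by positivity
  have hle : (∫⁻ x, ∫⁻ y, ENNReal.ofReal
        ((deriv Φ (max (u x) 0 - max (u y) 0) * (max (u x) 0 - max (u y) 0) ^ 2
          + Φ (max (u x) 0 - max (u y) 0) * (max (u x) 0 - max (u y) 0)) * K x y))
      ≤ ENNReal.ofReal (pstar * (C + lam * F)) := by
    rw [ENNReal.ofReal_mul hpstar0.le, ← hconstraint,
      ← lintegral_const_mul' _ _ ENNReal.ofReal_ne_top]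
    refine lintegral_mono fun x => ?_
    rw [← lintegral_const_mul' _ _ ENNReal.ofReal_ne_top]
    refine lintegral_mono fun y => ?_
    rw [← ENNReal.ofReal_mul hpstar0.le]
    refine ENNReal.ofReal_le_ofReal ?_
    -- On the diagonal `K` has no sign, but both integrands vanish there.
    rcases eq_or_ne x y with rfl | hxy
    · simp
    · have hK0 : 0 ≤ K x y := le_trans (by positivity) (hK x y hxy).1
      rw [← mul_assoc]
      exact mul_le_mul_of_nonneg_right (hpt _) hK0
  have hA := ENNReal.toReal_le_of_le_ofReal (by positivity) hle
  have hc : (pstar - 1) * c₁ < 1 := by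
    rw [lt_div_iff₀ (by linarith)] at hc₁
    linarith
  have hFG : (pstar - 1) * F < G := by
    have h1 : (pstar - 1) * F ≤ (pstar - 1) * (c₁ * G) :=
      mul_le_mul_of_nonneg_left hfc₁ (by linarith)
    have h2 := mul_lt_mul_of_pos_right hc hfup
    linarith
  have hlamFG := mul_lt_mul_of_pos_left hFG hlam
  linarith
end
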